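/- Let (X, Σ, μ; φ) be a measure-preserving dynamical system with discrete spectrum. Then there exist a compact Hausdorff space K, a continuous map ψ : K → K, and a ψ-invariant regular Borel probability measure μ_K on K such that: (1) the topological dynamical system (K, ψ) has discrete spectrum; (2) there is a bijective linear isometry S : L¹(K, μ_K) → L¹(X, μ) with S1 = 1, S|f| = |Sf| for all f, and S ∘ T_ψ = T_φ ∘ S (a Markov isomorphism intertwining the Koopman operators); and (3) the projection q : K → L of (K, ψ) onto its maximal trivial factor admits a continuous section s : L → K with q ∘ s = id_L. -/

import Mathlib

universe u

/-- A measure-preserving dynamical system has discrete spectrum if the linear span of the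
eigenvectors, with unimodular eigenvalues, of its Koopman operator on `L¹` is dense
in `L¹`. -/
def L1DiscreteSpectrum {X : Type*} [MeasurableSpace X] (μ : MeasureTheory.Measure X)
    (φ : X → X) : Prop :=
  Dense (↑(Submodule.span ℂ
    {f : MeasureTheory.Lp ℂ 1 μ | f ≠ 0 ∧ ∃ lam : ℂ, ‖lam‖ = 1 ∧
      (fun x => f (φ x)) =ᵐ[μ] fun x => lam * f x}) : Set (MeasureTheory.Lp ℂ 1 μ))

/-- A topological dynamical system has discrete spectrum if the linear span of the
eigenvectors of its Koopman operator with unimodular eigenvalues is dense in `C(K)`. -/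
def DiscreteSpectrum {K : Type*} [TopologicalSpace K] (ψ : K → K) : Prop :=
  Dense (↑(Submodule.span ℂ
    {f : C(K, ℂ) | f ≠ 0 ∧ ∃ lam : ℂ, ‖lam‖ = 1 ∧ ∀ x, f (ψ x) = lam * f x}) :
      Set C(K, ℂ))

/-- A topological model, with a continuous section of the projection onto the maximal
trivial factor, of a measure-preserving dynamical system `(X, μ; φ)`:
a compact Hausdorff topological dynamical system `(K, ψ)` with discrete spectrum, equipped
with an invariant regular Borel probability measure `μK`, which is Markov-isomorphic to
`(X, μ; φ)` via a bijective linear isometry `S : L¹(K, μK) → L¹(X, μ)` satisfying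
`S 1 = 1`, `S |f| = |S f|` and `S ∘ T_ψ = T_φ ∘ S`, and whose projection `q : K → L`
onto the maximal trivial factor admits a continuous section `s`. -/
structure TopologicalModel {X : Type u} [MeasurableSpace X] (μ : MeasureTheory.Measure X)
    (φ : X → X) where
  K : Type u
  [tK : TopologicalSpace K]
  [cK : CompactSpace K]
  [t2K : T2Space K]
  [mK : MeasurableSpace K]
  [bK : BorelSpace K]
  ψ : K → K
  hψ : Continuous ψ
  μK : MeasureTheory.Measure K
  [probK : MeasureTheory.IsProbabilityMeasure μK]
  regK : μK.Regular
  invK : MeasureTheory.MeasurePreserving ψ μK μK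
  discrete : DiscreteSpectrum ψ
  S : MeasureTheory.Lp ℂ 1 μK ≃ₗᵢ[ℂ] MeasureTheory.Lp ℂ 1 μ
  S_one : ∀ g : MeasureTheory.Lp ℂ 1 μK,
    (⇑g =ᵐ[μK] fun _ => (1 : ℂ)) → ⇑(S g) =ᵐ[μ] fun _ => (1 : ℂ)
  S_abs : ∀ f g : MeasureTheory.Lp ℂ 1 μK, (⇑g =ᵐ[μK] fun x => (‖f x‖ : ℂ)) →
    ⇑(S g) =ᵐ[μ] fun x => (‖S f x‖ : ℂ)
  S_intertwine : ∀ f g : MeasureTheory.Lp ℂ 1 μK, (⇑g =ᵐ[μK] fun x => f (ψ x)) →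
    ⇑(S g) =ᵐ[μ] fun x => S f (φ x)
  L : Type u
  [tL : TopologicalSpace L]
  [cL : CompactSpace L]
  [t2L : T2Space L]
  q : K → L
  hq : Continuous q
  hqsurj : Function.Surjective q
  hmax : ∀ f : C(K, ℂ), (∀ x, f (ψ x) = f x) ↔ ∃ g : C(L, ℂ), f = g.comp ⟨q, hq⟩
  s : L → K
  hs : Continuous s
  hsec : ∀ l, q (s l) = l

/-!
Bounded eigenfunctions, obtained by truncating the modulus, code the points of `X` by points of a
polydisc, on which `φ` becomes the coordinatewise rotation by the eigenvalues. The support `K` of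
the image measure is a model: on a compact space with a multiplicative family of eigenfunctions
which separates points, Stone–Weierstrass gives discrete spectrum, and `g ∘ val ↦ g ∘ eval` extends
from continuous functions `g` on the polydisc to the Markov isomorphism.

Since *all* bounded eigenfunctions are coordinates, in particular those with eigenvalue `1`, every
bounded invariant function on `K` agrees almost everywhere with a continuous invariant one. For
indicators of invariant open sets this says that the maximal trivial factor is extremally
disconnected, hence projective among compact Hausdorff spaces by Gleason's theorem, so the
projection onto it splits.

The polydisc is usually not metrizable and the coding map need not be Borel measurable, so image
measures are constructed by the Riesz representation theorem and all maps into the polydisc are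
tested on continuous functions only.
-/

section TopologicalModels

open MeasureTheory Filter Topology Metric
open scoped ENNReal

section StoneWeierstrass

variable {𝕜 Y : Type*} [RCLike 𝕜] [TopologicalSpace Y] [CompactSpace Y]

lemma dense_adjoin_of_separatesPoints {F : Set C(Y, 𝕜)}
    (hF : ((fun f : C(Y, 𝕜) => (f : Y → 𝕜)) '' F).SeparatesPoints) :
    Dense (StarAlgebra.adjoin 𝕜 F : Set C(Y, 𝕜)) := by
  have hsep : (StarAlgebra.adjoin 𝕜 F).SeparatesPoints := fun y z hyz => by
    obtain ⟨f, hf, hne⟩ := hF hyz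
    exact ⟨f, Set.image_mono (StarAlgebra.subset_adjoin 𝕜 F) hf, hne⟩
  rw [dense_iff_closure_eq, ← StarSubalgebra.topologicalClosure_coe,
    ContinuousMap.starSubalgebra_topologicalClosure_eq_top_of_separatesPoints _ hsep,
    StarSubalgebra.coe_top]

lemma induction_on_of_separatesPoints {F : Set C(Y, 𝕜)}
    (hF : ((fun f : C(Y, 𝕜) => (f : Y → 𝕜)) '' F).SeparatesPoints) {p : C(Y, 𝕜) → Prop}
    (hclosed : IsClosed {f | p f}) (mem : ∀ f ∈ F, p f)
    (algebraMap : ∀ c, p (algebraMap 𝕜 C(Y, 𝕜) c)) (add : ∀ f g, p f → p g → p (f + g))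
    (mul : ∀ f g, p f → p g → p (f * g)) (star : ∀ f, p f → p (star f)) (f : C(Y, 𝕜)) :
    p f :=
  (dense_adjoin_of_separatesPoints hF).induction
    (fun _ hf => StarAlgebra.adjoin_induction (p := fun f _ => p f) mem algebraMap
      (fun f g _ _ => add f g) (fun f g _ _ => mul f g) (fun f _ => star f) hf) hclosed f

end StoneWeierstrass

section TopologicalDynamics

variable {K : Type*} [TopologicalSpace K]

/-- The eigenfunctions of the Koopman operator of `ψ` on `C(K)` with unimodular eigenvalue,
including the zero function, as a multiplicative monoid. -/
def unimodularEigenfunctions (ψ : K → K) : Submonoid C(K, ℂ) where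
  carrier := {f | ∃ lam : ℂ, ‖lam‖ = 1 ∧ ∀ x, f (ψ x) = lam * f x}
  one_mem' := ⟨1, norm_one, fun _ => (one_mul _).symm⟩
  mul_mem' := by
    rintro f g ⟨a, ha, hf⟩ ⟨b, hb, hg⟩
    refine ⟨a * b, by rw [norm_mul, ha, hb, one_mul], fun x => ?_⟩
    rw [ContinuousMap.mul_apply, ContinuousMap.mul_apply, hf, hg, mul_mul_mul_comm]

lemma star_unimodularEigenfunctions (ψ : K → K) :
    star (unimodularEigenfunctions ψ : Set C(K, ℂ)) = unimodularEigenfunctions ψ := by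
  have hstar : ∀ f ∈ unimodularEigenfunctions ψ, star f ∈ unimodularEigenfunctions ψ := by
    rintro f ⟨a, ha, hf⟩
    refine ⟨star a, by rw [norm_star, ha], fun x => ?_⟩
    rw [ContinuousMap.star_apply, ContinuousMap.star_apply, hf, star_mul']
  exact Set.Subset.antisymm (fun f hf => star_star f ▸ hstar _ hf) hstar

lemma discreteSpectrum_of_separatesPoints [CompactSpace K] {ψ : K → K}
    (hsep : ((fun f : C(K, ℂ) => (f : K → ℂ)) '' unimodularEigenfunctions ψ).SeparatesPoints) :
    DiscreteSpectrum ψ := by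
  have hspan := StarAlgebra.adjoin_eq_span (R := ℂ) (unimodularEigenfunctions ψ : Set C(K, ℂ))
  rw [star_unimodularEigenfunctions, Set.union_self, Submonoid.closure_eq] at hspan
  refine (dense_adjoin_of_separatesPoints hsep).mono fun f hf => ?_
  have hf' : f ∈ Submodule.span ℂ (unimodularEigenfunctions ψ : Set C(K, ℂ)) := hspan ▸ hf
  refine Submodule.span_le.2 (fun g hg => ?_) hf'
  obtain rfl | hg0 := eq_or_ne g 0
  · exact Submodule.zero_mem _
  · exact Submodule.subset_span ⟨hg0, hg⟩

lemma separatesPoints_unimodularEigenfunctions_of_semiconj {Y : Type*}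
    [TopologicalSpace Y] {i : C(K, Y)} (hi : Function.Injective i) {ψ : K → K} {ρ : Y → Y}
    (hsemi : Function.Semiconj i ψ ρ)
    (hsep : ((fun f : C(Y, ℂ) => (f : Y → ℂ)) '' unimodularEigenfunctions ρ).SeparatesPoints) :
    ((fun f : C(K, ℂ) => (f : K → ℂ)) '' unimodularEigenfunctions ψ).SeparatesPoints := by
  intro x y hxy
  obtain ⟨_, ⟨f, ⟨a, ha, hf⟩, rfl⟩, hne⟩ := hsep (hi.ne hxy)
  exact ⟨_, ⟨f.comp i, ⟨a, ha, fun z => (congrArg f (hsemi z)).trans (hf (i z))⟩, rfl⟩, hne⟩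

/-- The evaluation of all `ψ`-invariant continuous functions at a point. -/
noncomputable def invariantEval (ψ : K → K) (x : K) : {f : C(K, ℂ) // ∀ x, f (ψ x) = f x} → ℂ :=
  fun f => f.1 x

lemma continuous_invariantEval (ψ : K → K) : Continuous (invariantEval ψ) :=
  continuous_pi fun f => f.1.continuous

/-- The maximal trivial factor of `(K, ψ)`, realised as the quotient of `K` which identifies
the points that are not separated by the `ψ`-invariant continuous functions. -/
abbrev MaximalTrivialFactor (ψ : K → K) := Quotient (Setoid.ker (invariantEval ψ))

namespace MaximalTrivialFactor

variable (ψ : K → K)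

/-- The projection onto the maximal trivial factor. -/
noncomputable def proj : C(K, MaximalTrivialFactor ψ) := ⟨Quotient.mk _, continuous_quotient_mk'⟩

lemma proj_surjective : Function.Surjective (proj ψ) := Quotient.mk_surjective

variable {ψ}

lemma proj_apply_map (x : K) : proj ψ (ψ x) = proj ψ x :=
  Quotient.sound (funext fun f => f.2 x)

lemma invariant_iff_exists_eq_comp_proj (f : C(K, ℂ)) :
    (∀ x, f (ψ x) = f x) ↔ ∃ g : C(MaximalTrivialFactor ψ, ℂ), f = g.comp (proj ψ) := by
  constructor
  · intro hf
    refine ⟨⟨Quotient.lift f fun x y hxy => congrFun hxy ⟨f, hf⟩, f.continuous.quotient_lift _⟩,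
      rfl⟩
  · rintro ⟨g, rfl⟩ x
    rw [ContinuousMap.comp_apply, proj_apply_map, ContinuousMap.comp_apply]

instance : T2Space (MaximalTrivialFactor ψ) :=
  T2Space.of_injective_continuous (Setoid.kerLift_injective (invariantEval ψ))
    ((continuous_invariantEval ψ).quotient_lift _)

theorem extremallyDisconnected [MeasurableSpace K] [OpensMeasurableSpace K] (κ : Measure K)
    [κ.IsOpenPosMeasure]
    (hκ : ∀ V : Set K, IsOpen V → ψ ⁻¹' V = V →
      ∃ g : C(K, ℂ), (∀ x, g (ψ x) = g x) ∧ g =ᵐ[κ] V.indicator 1) :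
    ExtremallyDisconnected (MaximalTrivialFactor ψ) where
  open_closure U hU := by
    have hV := hU.preimage (proj ψ).continuous
    obtain ⟨_, hg, hgV⟩ := hκ (proj ψ ⁻¹' U) hV (by
      ext x; rw [Set.mem_preimage, Set.mem_preimage, proj_apply_map, Set.mem_preimage])
    obtain ⟨g, rfl⟩ := (invariant_iff_exists_eq_comp_proj _).1 hg
    have eqOn_open : ∀ (W : Set (MaximalTrivialFactor ψ)) (c : ℂ), IsOpen W →
        (∀ x ∈ proj ψ ⁻¹' W, (proj ψ ⁻¹' U).indicator 1 x = c) → Set.EqOn g (fun _ => c) W := by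
      intro W c hW hc l hl
      obtain ⟨x, rfl⟩ := proj_surjective ψ l
      have hWo := hW.preimage (proj ψ).continuous
      refine Measure.eqOn_open_of_ae_eq (μ := κ) (g := fun _ => c) ?_ hWo
        (g.comp (proj ψ)).continuous.continuousOn continuousOn_const hl
      filter_upwards [ae_restrict_of_ae hgV, ae_restrict_mem hWo.measurableSet] with x hx hxW
      rw [hx, hc x hxW]
    have hg_one : Set.EqOn g (fun _ => 1) (closure U) :=
      (eqOn_open U 1 hU fun x hx => Set.indicator_of_mem hx 1).closure g.continuous
        continuous_const
    have hg_zero : Set.EqOn g (fun _ => 0) (closure U)ᶜ :=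
      eqOn_open _ 0 isClosed_closure.isOpen_compl fun x hx =>
        Set.indicator_of_notMem (fun hxU => hx (subset_closure hxU)) 1
    have hclosure : closure U = g ⁻¹' {0}ᶜ := by
      ext l
      refine ⟨fun hl => ?_, fun hl => by_contra fun hl' => hl (hg_zero hl')⟩
      rw [Set.mem_preimage, hg_one hl]
      exact one_ne_zero
    rw [hclosure]
    exact isOpen_compl_singleton.preimage g.continuous

theorem exists_continuous_section [CompactSpace K] [T2Space K]
    [ExtremallyDisconnected (MaximalTrivialFactor ψ)] :
    ∃ s : MaximalTrivialFactor ψ → K, Continuous s ∧ ∀ l, proj ψ (s l) = l := by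
  obtain ⟨s, hs, hsec⟩ := CompactT2.ExtremallyDisconnected.projective
    (A := MaximalTrivialFactor ψ) continuous_id (proj ψ).continuous (proj_surjective ψ)
  exact ⟨s, hs, congrFun hsec⟩

end MaximalTrivialFactor

end TopologicalDynamics

section Support

variable {Y : Type*} [TopologicalSpace Y] [MeasurableSpace Y] [BorelSpace Y] {ν : Measure Y}

lemma regular_comap_of_isClosedEmbedding {Z : Type*} [TopologicalSpace Z] [MeasurableSpace Z]
    [BorelSpace Z] {i : Z → Y} (hi : IsClosedEmbedding i) [ν.Regular] [IsFiniteMeasure ν] :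
    (ν.comap i).Regular := by
  have hme := hi.measurableEmbedding
  have : (ν.comap i).OuterRegular := Measure.OuterRegular.comap' ν hi.continuous hme
  have : IsFiniteMeasure (ν.comap i) := ⟨by
    rw [hme.comap_apply]
    exact measure_lt_top ν _⟩
  refine ⟨fun U hU => ?_⟩
  have hinner : ν.InnerRegularWRT IsCompact fun s => MeasurableSet s ∧ ν s ≠ ∞ :=
    Measure.InnerRegularCompactLTTop.innerRegular
  exact (hinner.comap hme
    (fun s hs => ⟨hme.measurableSet_image' hs, measure_ne_top ν _⟩)
    (fun C hC hCc => hi.isInducing.isCompact_preimage' hCc hC)) hU.measurableSet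

lemma measurePreserving_subtype_val_support [ν.Regular] :
    MeasurePreserving (Subtype.val : ν.support → Y) (ν.comap Subtype.val) ν :=
  ⟨measurable_subtype_coe, by
    rw [map_comap_subtype_coe Measure.isClosed_support.measurableSet]
    exact Measure.restrict_eq_self_of_ae_mem Measure.support_mem_ae_of_regular⟩

lemma isOpenPosMeasure_comap_support [ν.Regular] :
    (ν.comap (Subtype.val : ν.support → Y)).IsOpenPosMeasure := by
  refine ⟨fun U hU hne hU0 => ?_⟩
  obtain ⟨V, hV, rfl⟩ := isOpen_induced_iff.1 hU
  rw [measurePreserving_subtype_val_support.measure_preimage hV.nullMeasurableSet] at hU0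
  obtain ⟨x, hx⟩ := hne
  exact Measure.subset_compl_support_of_isOpen hV hU0 hx x.2

lemma mapsTo_support_of_measurePreserving {ρ : Y → Y} (hρ : Continuous ρ)
    (hmp : MeasurePreserving ρ ν ν) : Set.MapsTo ρ ν.support ν.support := by
  intro y hy
  rw [Measure.support_eq_forall_isOpen] at hy ⊢
  intro U hU hUo
  rw [← hmp.measure_preimage hUo.nullMeasurableSet]
  exact hy _ hU (hUo.preimage hρ)

lemma measurePreserving_restrict_support [ν.Regular] {ρ : Y → Y} (hρ : Continuous ρ)
    (hmp : MeasurePreserving ρ ν ν) :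
    MeasurePreserving ((mapsTo_support_of_measurePreserving hρ hmp).restrict ρ _ _)
      (ν.comap (Subtype.val : ν.support → Y)) (ν.comap Subtype.val) := by
  have hval : MeasurableEmbedding (Subtype.val : ν.support → Y) :=
    .subtype_coe Measure.isClosed_support.measurableSet
  have hmeas := (hρ.restrict (mapsTo_support_of_measurePreserving hρ hmp)).measurable
  refine ⟨hmeas, hval.map_injective ?_⟩
  rw [Measure.map_map hval.measurable hmeas]
  exact (hmp.comp measurePreserving_subtype_val_support).map_eq.trans
    measurePreserving_subtype_val_support.map_eq.symm

end Support

section BaireMaps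

variable {X Y : Type*} [MeasurableSpace X] {μ : Measure X} [TopologicalSpace Y]

/-- `φ : X → X` and `ρ : Y → Y` are semiconjugate through `π : X → Y` up to `μ`-null sets, as seen
by every continuous function on `Y`. The exceptional null set may depend on the function. -/
def BaireSemiconj (π : X → Y) (φ : X → X) (ρ : Y → Y) (μ : Measure X) : Prop :=
  ∀ g : C(Y, ℂ), (fun x => g (π (φ x))) =ᵐ[μ] fun x => g (ρ (π x))

/-- `π : X → Y` is almost everywhere measurable with respect to the Baire `σ`-algebra of `Y`, the
one generated by the continuous functions. If `Y` is not metrizable, this `σ`-algebra may be smaller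
than the Borel `σ`-algebra. -/
def BaireMeasurable (π : X → Y) (μ : Measure X) : Prop :=
  ∀ g : C(Y, ℂ), AEStronglyMeasurable (fun x => g (π x)) μ

/-- `π : X → Y` is measure preserving with respect to the Baire `σ`-algebra of `Y`; it need not be
measurable with respect to the Borel `σ`-algebra on which `ν` is defined. -/
structure BairePreserving [MeasurableSpace Y] (π : X → Y) (μ : Measure X) (ν : Measure Y) :
    Prop where
  baireMeasurable : BaireMeasurable π μ
  integral_comp : ∀ g : C(Y, ℝ), ∫ x, g (π x) ∂μ = ∫ y, g y ∂ν

lemma baireMeasurable_of_separatesPoints [CompactSpace Y] {π : X → Y}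
    {F : Set C(Y, ℂ)} (hF : ((fun f : C(Y, ℂ) => (f : Y → ℂ)) '' F).SeparatesPoints)
    (h : ∀ f ∈ F, AEStronglyMeasurable (fun x => f (π x)) μ) : BaireMeasurable π μ := by
  intro g
  refine induction_on_of_separatesPoints hF (p := fun g => AEStronglyMeasurable (g ∘ π) μ)
    (IsSeqClosed.isClosed fun u g hu hlim => ?_) h (fun _ => aestronglyMeasurable_const)
    (fun _ _ => .add) (fun _ _ => .mul) (fun _ hf => hf.star) g
  exact aestronglyMeasurable_of_tendsto_ae atTop hu
    (ae_of_all μ fun x => ((continuous_eval_const (π x)).tendsto g).comp hlim)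

lemma ae_comp_eq_comp_of_separatesPoints [CompactSpace Y] {a b : X → Y}
    {F : Set C(Y, ℂ)} (hF : ((fun f : C(Y, ℂ) => (f : Y → ℂ)) '' F).SeparatesPoints)
    (h : ∀ f ∈ F, (fun x => f (a x)) =ᵐ[μ] fun x => f (b x)) (g : C(Y, ℂ)) :
    (fun x => g (a x)) =ᵐ[μ] fun x => g (b x) := by
  refine induction_on_of_separatesPoints hF (p := fun g => g ∘ a =ᵐ[μ] g ∘ b)
    (IsSeqClosed.isClosed fun u g hu hlim => ?_) h (fun _ => .rfl)
    (fun _ _ => .add) (fun _ _ => .mul) (fun _ hf => hf.fun_comp star) g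
  have heval (y : Y) : Tendsto (fun n => u n y) atTop (𝓝 (g y)) :=
    ((continuous_eval_const y).tendsto g).comp hlim
  filter_upwards [ae_all_iff.2 hu] with x hx
  exact tendsto_nhds_unique (heval (a x)) ((heval (b x)).congr fun n => (hx n).symm)

lemma BaireMeasurable.aestronglyMeasurable_real {π : X → Y} (h : BaireMeasurable π μ)
    (g : C(Y, ℝ)) : AEStronglyMeasurable (fun x => g (π x)) μ :=
  Complex.continuous_re.comp_aestronglyMeasurable
    (h ((⟨Complex.ofReal, Complex.continuous_ofReal⟩ : C(ℝ, ℂ)).comp g))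

lemma BaireSemiconj.ae_eq_real {π : X → Y} {φ : X → X} {ρ : Y → Y} (h : BaireSemiconj π φ ρ μ)
    (g : C(Y, ℝ)) : (fun x => g (π (φ x))) =ᵐ[μ] fun x => g (ρ (π x)) := by
  filter_upwards [h ((⟨Complex.ofReal, Complex.continuous_ofReal⟩ : C(ℝ, ℂ)).comp g)] with x hx
  exact Complex.ofReal_injective hx

lemma memLp_comp_of_aestronglyMeasurable [CompactSpace Y] [IsFiniteMeasure μ] {E : Type*}
    [NormedAddCommGroup E] {π : X → Y} (g : C(Y, E))
    (h : AEStronglyMeasurable (fun x => g (π x)) μ) (p : ℝ≥0∞) :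
    MemLp (fun x => g (π x)) p μ :=
  .of_bound h ‖g‖ (ae_of_all μ fun _ => g.norm_coe_le_norm _)

lemma lipschitzWith_ofReal_norm {E : Type*} [SeminormedAddCommGroup E] :
    LipschitzWith 1 fun z : E => ((‖z‖ : ℝ) : ℂ) := by
  have h := Complex.isometry_ofReal.lipschitz.comp (lipschitzWith_one_norm (E := E))
  rwa [one_mul] at h

namespace BaireMeasurable

variable [CompactSpace Y] [IsFiniteMeasure μ] {π : X → Y}

/-- The class in `L¹(X, μ)` of the pullback `g ∘ π` of a continuous function `g`. -/
noncomputable def compL1 (hπ : BaireMeasurable π μ) : C(Y, ℂ) →ₗ[ℂ] Lp ℂ 1 μ where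
  toFun g := (memLp_comp_of_aestronglyMeasurable g (hπ g) 1).toLp _
  map_add' _ _ := rfl
  map_smul' _ _ := rfl

lemma coeFn_compL1 (hπ : BaireMeasurable π μ) (g : C(Y, ℂ)) :
    hπ.compL1 g =ᵐ[μ] fun x => g (π x) :=
  MemLp.coeFn_toLp (memLp_comp_of_aestronglyMeasurable g (hπ g) 1)

lemma compL1_eq_iff (hπ : BaireMeasurable π μ) {g : C(Y, ℂ)} {f : Lp ℂ 1 μ} :
    hπ.compL1 g = f ↔ (fun x => g (π x)) =ᵐ[μ] f :=
  ⟨fun h => h ▸ (hπ.coeFn_compL1 g).symm, fun h => Lp.ext ((hπ.coeFn_compL1 g).trans h)⟩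

lemma compLp_norm_compL1 (hπ : BaireMeasurable π μ) (g : C(Y, ℂ)) :
    lipschitzWith_ofReal_norm.compLp (by simp) (hπ.compL1 g) =
      hπ.compL1 ⟨fun y => (‖g y‖ : ℂ), by fun_prop⟩ := by
  refine (hπ.compL1_eq_iff.2 ?_).symm
  filter_upwards [lipschitzWith_ofReal_norm.coeFn_compLp (by simp) (hπ.compL1 g),
    hπ.coeFn_compL1 g] with x habs hx
  rw [habs, Function.comp_apply, hx, ContinuousMap.coe_mk]

lemma compMeasurePreserving_compL1 (hπ : BaireMeasurable π μ) {φ : X → X}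
    (hφ : MeasurePreserving φ μ μ) {ρ : C(Y, Y)} (hsemi : BaireSemiconj π φ ρ μ)
    (g : C(Y, ℂ)) :
    Lp.compMeasurePreserving φ hφ (hπ.compL1 g) = hπ.compL1 (g.comp ρ) := by
  refine (hπ.compL1_eq_iff.2 ?_).symm
  filter_upwards [Lp.coeFn_compMeasurePreserving (hπ.compL1 g) hφ,
    hφ.quasiMeasurePreserving.ae (hπ.coeFn_compL1 g), hsemi g] with x hcomp hx hsx
  rw [hcomp, Function.comp_apply, hx, hsx, ContinuousMap.comp_apply]

lemma denseRange_compL1_of_isClosedEmbedding [T2Space Y] {K : Type*} [TopologicalSpace K]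
    [CompactSpace K] [T2Space K] [MeasurableSpace K] [BorelSpace K] {κ : Measure K} [κ.Regular]
    {i : K → Y} (hi : IsClosedEmbedding i) (hκ : BaireMeasurable i κ) :
    DenseRange hκ.compL1 := by
  refine (ContinuousMap.toLp_denseRange ℂ κ ℂ ENNReal.one_ne_top).mono ?_
  rintro _ ⟨f, rfl⟩
  obtain ⟨g, rfl⟩ := ContinuousMap.exists_extension hi f
  exact ⟨g, rfl⟩

end BaireMeasurable

open CompactlySupported in
theorem exists_regular_bairePreserving [CompactSpace Y] [T2Space Y] [MeasurableSpace Y]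
    [BorelSpace Y] [IsFiniteMeasure μ] {π : X → Y} (h : BaireMeasurable π μ) :
    ∃ ν : Measure Y, ν.Regular ∧ BairePreserving π μ ν := by
  have hint (g : C(Y, ℝ)) : Integrable (fun x => g (π x)) μ :=
    memLp_one_iff_integrable.1 <|
      memLp_comp_of_aestronglyMeasurable g (h.aestronglyMeasurable_real g) 1
  let Λ : C_c(Y, ℝ) →ₚ[ℝ] ℝ :=
    { toFun := fun g => ∫ x, g (π x) ∂μ
      map_add' := fun f g => integral_add (hint f) (hint g)
      map_smul' := fun c g => integral_smul c fun x => g (π x)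
      monotone' := fun f g hfg => integral_mono (hint f) (hint g) fun x => hfg (π x) }
  exact ⟨RealRMK.rieszMeasure Λ, inferInstance, h, fun g =>
    (RealRMK.integral_rieszMeasure Λ (CompactlySupportedContinuousMap.continuousMapEquiv g)).symm⟩

lemma bairePreserving_of_measurePreserving [MeasurableSpace Y] [OpensMeasurableSpace Y]
    {ν : Measure Y} {π : X → Y} (hπ : MeasurePreserving π μ ν) : BairePreserving π μ ν where
  baireMeasurable g := g.continuous.aestronglyMeasurable.comp_measurePreserving hπ
  integral_comp g := by
    rw [← hπ.map_eq, integral_map hπ.aemeasurable g.continuous.aestronglyMeasurable]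

namespace BairePreserving

variable [MeasurableSpace Y] {π : X → Y} {ν : Measure Y}

lemma isProbabilityMeasure [IsProbabilityMeasure μ] (hπ : BairePreserving π μ ν) :
    IsProbabilityMeasure ν := by
  have h := hπ.integral_comp 1
  simp only [ContinuousMap.one_apply, integral_const, smul_eq_mul, mul_one, probReal_univ] at h
  exact isProbabilityMeasure_iff_real.2 h.symm

lemma measurePreserving_of_baireSemiconj [CompactSpace Y] [T2Space Y] [BorelSpace Y] [ν.Regular]
    (hπ : BairePreserving π μ ν) {φ : X → X} (hφ : MeasurePreserving φ μ μ) {ρ : Y → Y}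
    (hρ : Continuous ρ) (hsemi : BaireSemiconj π φ ρ μ) : MeasurePreserving ρ ν ν := by
  refine ⟨hρ.measurable, ?_⟩
  have : (ν.map ρ).InnerRegularCompactLTTop :=
    Measure.InnerRegularCompactLTTop.map_of_continuous hρ
  refine Measure.ext_of_integral_eq_on_compactlySupported fun f => ?_
  let g : C(Y, ℝ) := f
  have hg := hπ.baireMeasurable.aestronglyMeasurable_real g
  calc ∫ y, g y ∂ν.map ρ = ∫ y, g (ρ y) ∂ν :=
        integral_map hρ.measurable.aemeasurable g.continuous.aestronglyMeasurable
    _ = ∫ x, g (ρ (π x)) ∂μ := (hπ.integral_comp (g.comp ⟨ρ, hρ⟩)).symm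
    _ = ∫ x, g (π (φ x)) ∂μ := integral_congr_ae (hsemi.ae_eq_real g).symm
    _ = ∫ x, g (π x) ∂μ := by
      rw [← hφ.map_eq] at hg
      rw [← integral_map hφ.aemeasurable hg, hφ.map_eq]
    _ = ∫ y, g y ∂ν := hπ.integral_comp g

lemma norm_compL1 [CompactSpace Y] [IsFiniteMeasure μ] (hπ : BairePreserving π μ ν)
    (g : C(Y, ℂ)) : ‖hπ.baireMeasurable.compL1 g‖ = ∫ y, ‖g y‖ ∂ν := by
  rw [L1.norm_eq_integral_norm]
  exact (integral_congr_ae ((hπ.baireMeasurable.coeFn_compL1 g).fun_comp norm)).trans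
    (hπ.integral_comp ⟨fun y => ‖g y‖, g.continuous.norm⟩)

end BairePreserving

end BaireMaps

section MarkovIsomorphism

variable {X₁ X₂ Y : Type*} [MeasurableSpace X₁] [MeasurableSpace X₂] {μ₁ : Measure X₁}
  {μ₂ : Measure X₂}

/-- A map between `L¹`-spaces which fixes the constant function `1` and commutes with the modulus:
for linear `S`, a Markov lattice homomorphism. The hypotheses on `g` say that `g` is the class of
`1`, respectively of `|f|`. -/
structure IsMarkovLatticeHom (S : Lp ℂ 1 μ₁ → Lp ℂ 1 μ₂) : Prop where
  map_one : ∀ g : Lp ℂ 1 μ₁, (⇑g =ᵐ[μ₁] fun _ => (1 : ℂ)) → ⇑(S g) =ᵐ[μ₂] fun _ => (1 : ℂ)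
  map_norm : ∀ f g : Lp ℂ 1 μ₁, (⇑g =ᵐ[μ₁] fun x => (‖f x‖ : ℂ)) →
    ⇑(S g) =ᵐ[μ₂] fun x => (‖S f x‖ : ℂ)

/-- `S` intertwines the Koopman operators on `L¹` of `φ₁` and `φ₂`. -/
def IntertwinesKoopman (S : Lp ℂ 1 μ₁ → Lp ℂ 1 μ₂) (φ₁ : X₁ → X₁) (φ₂ : X₂ → X₂) : Prop :=
  ∀ f g : Lp ℂ 1 μ₁, (⇑g =ᵐ[μ₁] fun x => f (φ₁ x)) → ⇑(S g) =ᵐ[μ₂] fun x => S f (φ₂ x)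

lemma IsMarkovLatticeHom.ae_norm_le_one [IsFiniteMeasure μ₁] {F : Type*}
    [FunLike F (Lp ℂ 1 μ₁) (Lp ℂ 1 μ₂)] [AddMonoidHomClass F (Lp ℂ 1 μ₁) (Lp ℂ 1 μ₂)] {S : F}
    (hS : IsMarkovLatticeHom S) {f : Lp ℂ 1 μ₁} (hf : ∀ᵐ x ∂μ₁, ‖f x‖ ≤ 1) :
    ∀ᵐ x ∂μ₂, ‖S f x‖ ≤ 1 := by
  have hfm := (Lp.aestronglyMeasurable f).norm
  have hmemLp {u : X₁ → ℝ} (hu : AEStronglyMeasurable u μ₁) (hb : ∀ᵐ x ∂μ₁, ‖u x‖ ≤ 1) :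
      MemLp (fun x => (u x : ℂ)) 1 μ₁ :=
    .of_bound (Complex.continuous_ofReal.comp_aestronglyMeasurable hu) 1
      (hb.mono fun x hx => (Complex.norm_real _).trans_le hx)
  have ha := hmemLp hfm (hf.mono fun x hx => (norm_norm _).trans_le hx)
  have hb := hmemLp (aestronglyMeasurable_const.sub hfm) (u := fun x => 1 - ‖f x‖)
    (hf.mono fun x hx => by
      rw [Real.norm_of_nonneg (sub_nonneg.2 hx)]
      exact sub_le_self _ (norm_nonneg _))
  set a := ha.toLp
  set b := hb.toLp
  have hSa : S a =ᵐ[μ₂] fun x => (‖S f x‖ : ℂ) := hS.map_norm f a ha.coeFn_toLp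
  have hSb : S b =ᵐ[μ₂] fun x => (‖S b x‖ : ℂ) := hS.map_norm b b <| by
    filter_upwards [hb.coeFn_toLp, hf] with x hx hfx
    rw [hx, Complex.norm_real, Real.norm_of_nonneg (sub_nonneg.2 hfx)]
  have hSab : S (a + b) =ᵐ[μ₂] fun _ => (1 : ℂ) := hS.map_one _ <| by
    filter_upwards [Lp.coeFn_add a b, ha.coeFn_toLp, hb.coeFn_toLp] with x hab hax hbx
    rw [hab, Pi.add_apply, hax, hbx, ← Complex.ofReal_add, add_sub_cancel, Complex.ofReal_one]
  rw [map_add] at hSab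
  filter_upwards [hSa, hSb, hSab, Lp.coeFn_add (S a) (S b)] with x hax hbx h1 hab
  rw [hab, Pi.add_apply, hax, hbx, ← Complex.ofReal_add, ← Complex.ofReal_one] at h1
  exact (le_add_of_nonneg_right (norm_nonneg _)).trans_eq (Complex.ofReal_injective h1)

namespace BairePreserving

variable [IsFiniteMeasure μ₁] [IsFiniteMeasure μ₂] [TopologicalSpace Y] [CompactSpace Y]
  [MeasurableSpace Y] {ν : Measure Y} {π₁ : X₁ → Y} {π₂ : X₂ → Y}

/-- The isometric isomorphism `L¹(X₁, μ₁) ≃ L¹(X₂, μ₂)` which sends `g ∘ π₁` to `g ∘ π₂` for all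
continuous functions `g` on the common quotient `Y` of `X₁` and `X₂`. -/
noncomputable def markovIso (h₁ : BairePreserving π₁ μ₁ ν) (h₂ : BairePreserving π₂ μ₂ ν)
    (hd₁ : DenseRange h₁.baireMeasurable.compL1) (hd₂ : DenseRange h₂.baireMeasurable.compL1) :
    Lp ℂ 1 μ₁ ≃ₗᵢ[ℂ] Lp ℂ 1 μ₂ :=
  (LinearEquiv.refl ℂ C(Y, ℂ)).extendOfIsometry h₁.baireMeasurable.compL1
    h₂.baireMeasurable.compL1 hd₁ hd₂ fun g =>
      (h₂.norm_compL1 g).trans (h₁.norm_compL1 g).symm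

section

variable (h₁ : BairePreserving π₁ μ₁ ν) (h₂ : BairePreserving π₂ μ₂ ν)
  (hd₁ : DenseRange h₁.baireMeasurable.compL1) (hd₂ : DenseRange h₂.baireMeasurable.compL1)

lemma markovIso_compL1 (g : C(Y, ℂ)) :
    h₁.markovIso h₂ hd₁ hd₂ (h₁.baireMeasurable.compL1 g) = h₂.baireMeasurable.compL1 g :=
  LinearEquiv.extendOfIsometry_eq ..

lemma isMarkovLatticeHom_markovIso : IsMarkovLatticeHom (h₁.markovIso h₂ hd₁ hd₂) where
  map_one g hg := by
    have hg' : h₁.baireMeasurable.compL1 1 = g := h₁.baireMeasurable.compL1_eq_iff.2 hg.symm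
    rw [← hg', markovIso_compL1]
    exact h₂.baireMeasurable.coeFn_compL1 1
  map_norm f g hg := by
    have hnorm : ∀ f, h₁.markovIso h₂ hd₁ hd₂ (lipschitzWith_ofReal_norm.compLp (by simp) f) =
        lipschitzWith_ofReal_norm.compLp (by simp) (h₁.markovIso h₂ hd₁ hd₂ f) := by
      refine hd₁.induction ?_ (isClosed_eq ?_ ?_)
      · rintro _ ⟨v, rfl⟩
        rw [BaireMeasurable.compLp_norm_compL1, markovIso_compL1, markovIso_compL1,
          BaireMeasurable.compLp_norm_compL1]
      · exact (LinearIsometryEquiv.continuous _).comp (LipschitzWith.continuous_compLp _ _)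
      · exact (LipschitzWith.continuous_compLp _ _).comp (LinearIsometryEquiv.continuous _)
    have hg' : g = lipschitzWith_ofReal_norm.compLp (by simp) f :=
      Lp.ext (hg.trans (lipschitzWith_ofReal_norm.coeFn_compLp _ f).symm)
    rw [hg', hnorm]
    exact LipschitzWith.coeFn_compLp _ _ _

lemma intertwinesKoopman_markovIso {φ₁ : X₁ → X₁} {φ₂ : X₂ → X₂}
    (hφ₁ : MeasurePreserving φ₁ μ₁ μ₁) (hφ₂ : MeasurePreserving φ₂ μ₂ μ₂) {ρ : C(Y, Y)}
    (hs₁ : BaireSemiconj π₁ φ₁ ρ μ₁) (hs₂ : BaireSemiconj π₂ φ₂ ρ μ₂) :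
    IntertwinesKoopman (h₁.markovIso h₂ hd₁ hd₂) φ₁ φ₂ := by
  have hkoopman : ∀ f, h₁.markovIso h₂ hd₁ hd₂ (Lp.compMeasurePreserving φ₁ hφ₁ f) =
      Lp.compMeasurePreserving φ₂ hφ₂ (h₁.markovIso h₂ hd₁ hd₂ f) := by
    refine hd₁.induction ?_ (isClosed_eq ?_ ?_)
    · rintro _ ⟨v, rfl⟩
      rw [h₁.baireMeasurable.compMeasurePreserving_compL1 hφ₁ hs₁, markovIso_compL1,
        markovIso_compL1, h₂.baireMeasurable.compMeasurePreserving_compL1 hφ₂ hs₂]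
    · exact (LinearIsometryEquiv.continuous _).comp
        (Lp.isometry_compMeasurePreserving hφ₁).continuous
    · exact (Lp.isometry_compMeasurePreserving hφ₂).continuous.comp
        (LinearIsometryEquiv.continuous _)
  intro f g hg
  have hg' : g = Lp.compMeasurePreserving φ₁ hφ₁ f :=
    Lp.ext (hg.trans (Lp.coeFn_compMeasurePreserving f hφ₁).symm)
  rw [hg', hkoopman]
  exact Lp.coeFn_compMeasurePreserving _ hφ₂

end

end BairePreserving

end MarkovIsomorphism

section BoundedInvariants

variable {X Y : Type*} [MeasurableSpace X] {μ : Measure X} [TopologicalSpace Y]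

/-- Every function in the unit ball of `L^∞(X, μ)` which is invariant under `φ` is the pullback
along `π : X → Y` of a `ρ`-invariant continuous function. The unit ball of `L^∞` is described
inside `L¹`, where the Markov isomorphisms act. -/
def BoundedInvariantsLift (π : X → Y) (φ : X → X) (ρ : Y → Y) (μ : Measure X) : Prop :=
  ∀ f : Lp ℂ 1 μ, (fun x => f (φ x)) =ᵐ[μ] f → (∀ᵐ x ∂μ, ‖f x‖ ≤ 1) →
    ∃ g : C(Y, ℂ), (∀ y, g (ρ y) = g y) ∧ (fun x => g (π x)) =ᵐ[μ] f

lemma BoundedInvariantsLift.of_markovIso {X' : Type*} [MeasurableSpace X'] {μ' : Measure X'}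
    [IsFiniteMeasure μ] [IsFiniteMeasure μ'] [CompactSpace Y] [MeasurableSpace Y] {ν : Measure Y}
    {π : X → Y} {π' : X' → Y} {φ : X → X} {φ' : X' → X'} {ρ : Y → Y}
    (h : BairePreserving π μ ν) (h' : BairePreserving π' μ' ν)
    (hd : DenseRange h.baireMeasurable.compL1) (hd' : DenseRange h'.baireMeasurable.compL1)
    (hint : IntertwinesKoopman (h.markovIso h' hd hd') φ φ')
    (hinv : BoundedInvariantsLift π' φ' ρ μ') : BoundedInvariantsLift π φ ρ μ := by
  intro f hf hbound
  obtain ⟨g, hρg, hg⟩ := hinv (h.markovIso h' hd hd' f) (hint f f hf.symm).symm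
    ((h.isMarkovLatticeHom_markovIso h' hd hd').ae_norm_le_one hbound)
  refine ⟨g, hρg, h.baireMeasurable.compL1_eq_iff.1 <| (h.markovIso h' hd hd').injective ?_⟩
  rw [h.markovIso_compL1 h', h'.baireMeasurable.compL1_eq_iff.2 hg]

lemma BoundedInvariantsLift.exists_ae_eq_indicator {K : Type*} [TopologicalSpace K]
    [MeasurableSpace K] {κ : Measure K} [IsFiniteMeasure κ] {i : C(K, Y)} {ψ : K → K} {ρ : Y → Y}
    (hi : Function.Semiconj i ψ ρ) (hψ : MeasurePreserving ψ κ κ)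
    (hinv : BoundedInvariantsLift i ψ ρ κ) {V : Set K} (hV : MeasurableSet V)
    (hψV : ψ ⁻¹' V = V) :
    ∃ g : C(K, ℂ), (∀ x, g (ψ x) = g x) ∧ g =ᵐ[κ] V.indicator 1 := by
  have hf : indicatorConstLp 1 hV (measure_ne_top κ V) (1 : ℂ) =ᵐ[κ] V.indicator 1 :=
    indicatorConstLp_coeFn
  set f := indicatorConstLp 1 hV (measure_ne_top κ V) (1 : ℂ)
  have hfψ : (fun x => f (ψ x)) =ᵐ[κ] f := by
    filter_upwards [hf, hψ.quasiMeasurePreserving.ae hf] with x hx hψx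
    rw [hψx, hx, ← Set.indicator_comp_right, hψV]
    rfl
  obtain ⟨g, hρg, hg⟩ := hinv f hfψ <| by
    filter_upwards [hf] with x hx
    rw [hx]
    exact (norm_indicator_le_norm_self 1 x).trans_eq norm_one
  exact ⟨g.comp i, fun x => (congrArg g (hi x)).trans (hρg (i x)), hg.trans hf⟩

end BoundedInvariants

instance compactSpace_closedBall {M : Type*} [PseudoMetricSpace M] [ProperSpace M] (x : M)
    (r : ℝ) : CompactSpace (closedBall x r) :=
  isCompact_iff_compactSpace.1 (isCompact_closedBall x r)

/-- The power of the closed unit disc indexed by `ι`. -/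
abbrev Polydisc (ι : Type*) := ι → closedBall (0 : ℂ) 1

namespace Polydisc

variable {ι : Type*}

/-- A coordinate of the polydisc, as a complex-valued continuous function. -/
def coord (i : ι) : C(Polydisc ι, ℂ) := ⟨fun p => p i, by fun_prop⟩

lemma separatesPoints_range_coord :
    ((fun f : C(Polydisc ι, ℂ) => (f : Polydisc ι → ℂ)) '' Set.range coord).SeparatesPoints := by
  intro p q hpq
  obtain ⟨i, hi⟩ := Function.ne_iff.1 hpq
  exact ⟨coord i, ⟨_, ⟨i, rfl⟩, rfl⟩, fun h => hi (Subtype.ext h)⟩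

/-- The coordinatewise rotation of the polydisc by a family of points on the unit circle. -/
noncomputable def rotation (a : ι → sphere (0 : ℂ) 1) : C(Polydisc ι, Polydisc ι) :=
  ⟨fun p i => a i • p i, by fun_prop⟩

lemma coord_rotation (a : ι → sphere (0 : ℂ) 1) (i : ι) (p : Polydisc ι) :
    coord i (rotation a p) = a i * coord i p := rfl

lemma separatesPoints_unimodularEigenfunctions_rotation (a : ι → sphere (0 : ℂ) 1) :
    ((fun f : C(Polydisc ι, ℂ) => (f : Polydisc ι → ℂ)) ''
      unimodularEigenfunctions (rotation a)).SeparatesPoints := by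
  intro p q hpq
  obtain ⟨_, ⟨_, ⟨i, rfl⟩, rfl⟩, hne⟩ := separatesPoints_range_coord hpq
  exact ⟨_, ⟨coord i, ⟨a i, norm_eq_of_mem_sphere (a i), coord_rotation a i⟩, rfl⟩, hne⟩

end Polydisc

section Eigenfunctions

variable {X : Type*} [MeasurableSpace X] {μ : Measure X} {φ : X → X}

lemma tendsto_Lp_of_ae_eq_indicator_norm_le {E : Type*} [NormedAddCommGroup E] {f : Lp E 1 μ}
    {u : ℕ → Lp E 1 μ} {c : ℕ → ℝ} (hc : Tendsto c atTop atTop)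
    (hu : ∀ n, u n =ᵐ[μ] {x | ‖f x‖ ≤ c n}.indicator f) : Tendsto u atTop (𝓝 f) := by
  have hlim (x : X) : Tendsto (fun n => {x | ‖f x‖ ≤ c n}.indicator f x) atTop (𝓝 (f x)) :=
    tendsto_const_nhds.congr' <| (hc.eventually_ge_atTop ‖f x‖).mono fun n hn =>
      (Set.indicator_of_mem (s := {x | ‖f x‖ ≤ c n}) hn f).symm
  have hdom := tendsto_lintegral_norm_of_dominated_convergence (bound := fun x => ‖f x‖)
    (fun n => (Lp.aestronglyMeasurable (u n)).congr (hu n))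
    (L1.integrable_coeFn f).norm.2 (fun n => ae_of_all μ fun x => norm_indicator_le_norm_self f x)
    (ae_of_all μ hlim)
  rw [Lp.tendsto_Lp_iff_tendsto_eLpNorm']
  refine hdom.congr fun n => ?_
  rw [eLpNorm_one_eq_lintegral_enorm]
  refine lintegral_congr_ae ?_
  filter_upwards [hu n] with x hx
  rw [Pi.sub_apply, hx, ofReal_norm]

variable (μ φ) in
/-- An eigenfunction of the Koopman operator of `φ`, with values in the closed unit disc and
unimodular eigenvalue. It is a genuine function, not a class modulo `μ`-null sets, so that it can
be evaluated at points of `X`. -/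
structure BoundedEigenfunction where
  toFun : X → closedBall (0 : ℂ) 1
  eigenvalue : sphere (0 : ℂ) 1
  aestronglyMeasurable : AEStronglyMeasurable (fun x => (toFun x : ℂ)) μ
  ae_map_eq : (fun x => (toFun (φ x) : ℂ)) =ᵐ[μ] fun x => eigenvalue * toFun x

namespace BoundedEigenfunction

variable (μ φ) in
/-- The evaluation of all bounded eigenfunctions at a point. -/
def eval (x : X) : Polydisc (BoundedEigenfunction μ φ) := fun e => e.toFun x

variable (μ φ) in
/-- The rotation of the polydisc over all bounded eigenfunctions by their eigenvalues. -/
noncomputable def rotation :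
    C(Polydisc (BoundedEigenfunction μ φ), Polydisc (BoundedEigenfunction μ φ)) :=
  Polydisc.rotation eigenvalue

lemma baireMeasurable_eval : BaireMeasurable (eval μ φ) μ :=
  baireMeasurable_of_separatesPoints Polydisc.separatesPoints_range_coord
    (Set.forall_mem_range.2 aestronglyMeasurable)

lemma baireSemiconj_eval : BaireSemiconj (eval μ φ) φ (rotation μ φ) μ :=
  ae_comp_eq_comp_of_separatesPoints Polydisc.separatesPoints_range_coord
    (Set.forall_mem_range.2 ae_map_eq)

lemma exists_comp_eval_eq_indicator_norm_le {f : X → ℂ} (hf : StronglyMeasurable f) {a : ℂ}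
    (ha : ‖a‖ = 1) (hfa : (fun x => f (φ x)) =ᵐ[μ] fun x => a * f x) {C : ℝ} (hC : 0 < C) :
    ∃ g : C(Polydisc (BoundedEigenfunction μ φ), ℂ), (∀ p, g (rotation μ φ p) = a * g p) ∧
      ∀ x, g (eval μ φ x) = {x | ‖f x‖ ≤ C}.indicator f x := by
  set F := {x | ‖f x‖ ≤ C}.indicator f with hF
  have hFm : StronglyMeasurable F :=
    hf.indicator (hf.norm.measurableSet_le stronglyMeasurable_const)
  have hFC (x : X) : ‖F x‖ ≤ C := by
    rw [hF, Set.indicator_apply]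
    split_ifs with hx
    · exact hx
    · exact norm_zero.trans_le hC.le
  have hFa : (fun x => F (φ x)) =ᵐ[μ] fun x => a * F x := by
    filter_upwards [hfa] with x hx
    have hnorm : ‖f (φ x)‖ = ‖f x‖ := by rw [hx, norm_mul, ha, one_mul]
    simp only [hF, Set.indicator_apply, Set.mem_ofPred_eq, hnorm]
    rw [hx, mul_ite, mul_zero]
  have hC0 : (C : ℂ) ≠ 0 := Complex.ofReal_ne_zero.2 hC.ne'
  let e : BoundedEigenfunction μ φ :=
    { toFun := fun x => ⟨(C : ℂ)⁻¹ * F x, by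
        rw [mem_closedBall_zero_iff, norm_mul, norm_inv, Complex.norm_of_nonneg hC.le]
        exact inv_mul_le_one_of_le₀ (hFC x) hC.le⟩
      eigenvalue := ⟨a, mem_sphere_zero_iff_norm.2 ha⟩
      aestronglyMeasurable := (hFm.const_mul _).aestronglyMeasurable
      ae_map_eq := by
        filter_upwards [hFa] with x hx
        rw [hx, mul_left_comm] }
  refine ⟨(C : ℂ) • Polydisc.coord e, fun p => mul_left_comm _ _ _,
    fun x => mul_inv_cancel_left₀ hC0 (F x)⟩

lemma denseRange_compL1_eval [IsFiniteMeasure μ] (hds : L1DiscreteSpectrum μ φ) :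
    DenseRange (baireMeasurable_eval (μ := μ) (φ := φ)).compL1 := by
  set A := (baireMeasurable_eval (μ := μ) (φ := φ)).compL1
  suffices h : Submodule.span ℂ _ ≤ A.range.topologicalClosure from
    dense_closure.1 (hds.mono h)
  refine Submodule.span_le.2 ?_
  rintro f ⟨-, a, ha, hfa⟩
  choose g _ hg using fun n : ℕ =>
    exists_comp_eval_eq_indicator_norm_le (Lp.stronglyMeasurable f) ha hfa n.cast_add_one_pos
  refine mem_closure_of_tendsto (tendsto_Lp_of_ae_eq_indicator_norm_le (u := fun n => A (g n))
    (tendsto_atTop_add_const_right _ 1 tendsto_natCast_atTop_atTop) fun n => ?_)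
    (.of_forall fun n => ⟨g n, rfl⟩)
  exact (baireMeasurable_eval.coeFn_compL1 (g n)).trans (ae_of_all μ (hg n))

lemma boundedInvariantsLift_eval : BoundedInvariantsLift (eval μ φ) φ (rotation μ φ) μ := by
  intro f hinv hbound
  obtain ⟨g, hrot, hg⟩ := exists_comp_eval_eq_indicator_norm_le
    (Lp.stronglyMeasurable f) norm_one
    (hinv.trans (ae_of_all μ fun x => (one_mul (f x)).symm)) one_pos
  refine ⟨g, fun p => (hrot p).trans (one_mul _), ?_⟩
  filter_upwards [hbound] with x hx
  exact (hg x).trans (Set.indicator_of_mem (s := {x | ‖f x‖ ≤ 1}) hx f)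

end BoundedEigenfunction

end Eigenfunctions

section Models

variable {X : Type u} [MeasurableSpace X] {μ : Measure X} {φ : X → X}

theorem nonempty_topologicalModel_of_indicator {K : Type u} [TopologicalSpace K] [CompactSpace K]
    [T2Space K] [MeasurableSpace K] [BorelSpace K] {κ : Measure K} [IsProbabilityMeasure κ]
    [κ.Regular] [κ.IsOpenPosMeasure] {ψ : K → K} (hψ : Continuous ψ)
    (hmp : MeasurePreserving ψ κ κ) (hdisc : DiscreteSpectrum ψ)
    {S : Lp ℂ 1 κ ≃ₗᵢ[ℂ] Lp ℂ 1 μ} (hS : IsMarkovLatticeHom S) (hint : IntertwinesKoopman S ψ φ)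
    (hinv : ∀ V : Set K, IsOpen V → ψ ⁻¹' V = V →
      ∃ g : C(K, ℂ), (∀ x, g (ψ x) = g x) ∧ g =ᵐ[κ] V.indicator 1) :
    Nonempty (TopologicalModel μ φ) := by
  have := MaximalTrivialFactor.extremallyDisconnected κ hinv
  obtain ⟨s, hs, hsec⟩ := MaximalTrivialFactor.exists_continuous_section (ψ := ψ)
  exact ⟨{
    K := K
    ψ := ψ
    hψ := hψ
    μK := κ
    regK := inferInstance
    invK := hmp
    discrete := hdisc
    S := S
    S_one := hS.map_one
    S_abs := hS.map_norm
    S_intertwine := hint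
    L := MaximalTrivialFactor ψ
    q := MaximalTrivialFactor.proj ψ
    hq := (MaximalTrivialFactor.proj ψ).continuous
    hqsurj := MaximalTrivialFactor.proj_surjective ψ
    hmax := MaximalTrivialFactor.invariant_iff_exists_eq_comp_proj
    s := s
    hs := hs
    hsec := hsec }⟩

theorem nonempty_topologicalModel_of_baireSemiconj [IsProbabilityMeasure μ]
    (hφ : MeasurePreserving φ μ μ) {Y : Type u} [TopologicalSpace Y] [CompactSpace Y] [T2Space Y]
    {π : X → Y} (hπ : BaireMeasurable π μ) {ρ : C(Y, Y)} (hsemi : BaireSemiconj π φ ρ μ)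
    (hsep : ((fun f : C(Y, ℂ) => (f : Y → ℂ)) '' unimodularEigenfunctions ρ).SeparatesPoints)
    (hd : DenseRange hπ.compL1) (hinv : BoundedInvariantsLift π φ ρ μ) :
    Nonempty (TopologicalModel μ φ) := by
  let _ : MeasurableSpace Y := borel Y
  have : BorelSpace Y := ⟨rfl⟩
  obtain ⟨ν, _, hν⟩ := exists_regular_bairePreserving hπ
  have := hν.isProbabilityMeasure
  have hρ := hν.measurePreserving_of_baireSemiconj hφ ρ.continuous hsemi
  have hmaps := mapsTo_support_of_measurePreserving ρ.continuous hρ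
  have hi : IsClosedEmbedding (Subtype.val : ν.support → Y) :=
    Measure.isClosed_support.isClosedEmbedding_subtypeVal
  have : CompactSpace ν.support := hi.compactSpace
  let i : C(ν.support, Y) := ⟨Subtype.val, continuous_subtype_val⟩
  set κ : Measure ν.support := ν.comap Subtype.val
  have : κ.Regular := regular_comap_of_isClosedEmbedding hi
  have : κ.IsOpenPosMeasure := isOpenPosMeasure_comap_support
  have hval : MeasurePreserving Subtype.val κ ν := measurePreserving_subtype_val_support
  have : IsProbabilityMeasure κ :=
    (Measure.isProbabilityMeasure_map_iff hval.aemeasurable).1 (hval.map_eq.symm ▸ inferInstance)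
  have hψ : MeasurePreserving (hmaps.restrict ρ _ _) κ κ :=
    measurePreserving_restrict_support ρ.continuous hρ
  have hκ := bairePreserving_of_measurePreserving hval
  have hdκ := BaireMeasurable.denseRange_compL1_of_isClosedEmbedding hi hκ.baireMeasurable
  have hint := hκ.intertwinesKoopman_markovIso hν hdκ hd hψ hφ (fun _ => .rfl) hsemi
  refine nonempty_topologicalModel_of_indicator (ρ.continuous.restrict hmaps) hψ
    (discreteSpectrum_of_separatesPoints ?_) (hκ.isMarkovLatticeHom_markovIso hν hdκ hd) hint ?_
  · exact separatesPoints_unimodularEigenfunctions_of_semiconj (i := i) hi.injective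
      (fun _ => rfl) hsep
  · exact fun V hV => (BoundedInvariantsLift.of_markovIso hκ hν hdκ hd hint
      hinv).exists_ae_eq_indicator (i := i) (fun _ => rfl) hψ hV.measurableSet

end Models

end TopologicalModels

/-- Every measure-preserving dynamical system with discrete spectrum has a
topological model with discrete spectrum whose projection onto the maximal trivial factor
admits a continuous section (through which it is Markov-isomorphic to a topological system). -/
theorem exists_topologicalModel_with_section
    {X : Type u} [MeasurableSpace X] (μ : MeasureTheory.Measure X)
    [MeasureTheory.IsProbabilityMeasure μ]
    (φ : X → X) (hφ : MeasureTheory.MeasurePreserving φ μ μ)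
    (hds : L1DiscreteSpectrum μ φ) :
    Nonempty (TopologicalModel μ φ) :=
  nonempty_topologicalModel_of_baireSemiconj hφ BoundedEigenfunction.baireMeasurable_eval
    BoundedEigenfunction.baireSemiconj_eval
    (Polydisc.separatesPoints_unimodularEigenfunctions_rotation BoundedEigenfunction.eigenvalue)
    (BoundedEigenfunction.denseRange_compL1_eval hds)
    BoundedEigenfunction.boundedInvariantsLift_eval
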